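/- Let Ω ⊂ ℝⁿ be a bounded domain with smooth boundary, let B be a majorant, and let u be harmonic in Ω. If u ∈ Λ_B(Ω), i.e. there is C_u > 0 with |u(x) − u(y)| ≤ C_u·B(|x−y|) for all x, y ∈ Ω, then there is a constant C > 0 such that |∇u(x)| ≤ C·B(δ(x))/δ(x) for every x ∈ Ω, where δ(x) is the Euclidean distance of x to bΩ. -/

import Mathlib

open MeasureTheory Metric Set

noncomputable section

/-- `ℝⁿ` as a Euclidean space. -/
abbrev En (n : ℕ) := EuclideanSpace ℝ (Fin n)

/-- A majorant: a continuous function `B : [0,∞) → [0,∞)` with `B 0 = 0`,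
`B` non-decreasing, and `t ↦ B t / t` non-increasing on `(0,∞)`. -/
def Majorant (B : ℝ → ℝ) : Prop :=
  ContinuousOn B (Ici 0) ∧ (∀ t, 0 ≤ t → 0 ≤ B t) ∧ B 0 = 0 ∧
  (∀ s t, 0 ≤ s → s ≤ t → B s ≤ B t) ∧
  (∀ s t, 0 < s → s ≤ t → B t / t ≤ B s / s)

/-- A regular majorant: a majorant satisfying
`∫₀^δ B t / t dt + δ • ∫_δ^∞ B t / t ^ 2 dt ≤ C * B δ` for all sufficiently small `δ > 0`. -/
def RegularMajorant (B : ℝ → ℝ) : Prop :=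
  Majorant B ∧ ∃ C > (0:ℝ), ∃ δ₁ > (0:ℝ), ∀ δ : ℝ, 0 < δ → δ ≤ δ₁ →
    (∫⁻ t in Ioc (0:ℝ) δ, ENNReal.ofReal (B t / t)) +
      ENNReal.ofReal δ * (∫⁻ t in Ioi δ, ENNReal.ofReal (B t / t ^ 2)) ≤
    ENNReal.ofReal (C * B δ)

/-- `f` is Lipschitz-`B` on `S`, i.e. `f ∈ Λ_B(S)`. -/
def LipschitzB {E : Type*} [NormedAddCommGroup E] (B : ℝ → ℝ) (f : E → ℝ) (S : Set E) : Prop :=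
  ∃ C > (0:ℝ), ∀ x ∈ S, ∀ y ∈ S, |f x - f y| ≤ C * B ‖x - y‖

/-- `u` is harmonic on `Ω`: it is `C²` there and its Laplacian vanishes. -/
def IsHarmonicOn {n : ℕ} (u : En n → ℝ) (Ω : Set (En n)) : Prop :=
  ContDiffOn ℝ 2 u Ω ∧ ∀ x ∈ Ω,
    (∑ i : Fin n, fderiv ℝ (fun y => fderiv ℝ u y (EuclideanSpace.single i 1)) x
      (EuclideanSpace.single i 1)) = 0

/-- `Ω` has `C^∞` smooth boundary: there is a smooth defining function on a
neighbourhood of the boundary with non-vanishing gradient. -/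
def HasSmoothBoundary {n : ℕ} (Ω : Set (En n)) : Prop :=
  ∃ (U : Set (En n)) (r : En n → ℝ), IsOpen U ∧ frontier Ω ⊆ U ∧
    ContDiffOn ℝ (⊤ : ℕ∞) r U ∧ (∀ x ∈ U, (x ∈ Ω ↔ r x < 0)) ∧
    ∀ x ∈ frontier Ω, gradient r x ≠ 0

/-- `ν` is the outward unit normal to `bΩ` at `p`: it is a unit vector and moving
from `p` into `Ω` along `-ν` realizes the distance to the boundary. -/
def IsOutwardUnitNormal {n : ℕ} (Ω : Set (En n)) (p ν : En n) : Prop :=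
  ‖ν‖ = 1 ∧ ∀ᶠ t in nhdsWithin (0:ℝ) (Ioi 0),
    p - t • ν ∈ Ω ∧ infDist (p - t • ν) (frontier Ω) = t


open scoped Topology

/-- Necessary second-order condition at a local maximum of a function of one real variable. -/
theorem IsLocalMax.second_deriv_nonpos {g g' : ℝ → ℝ} {a c : ℝ} (hmax : IsLocalMax g a)
    (hg : ∀ᶠ t in 𝓝 a, HasDerivAt g (g' t) t) (hg' : HasDerivAt g' c a) : c ≤ 0 := by
  by_contra! hc
  have hderiv : deriv g =ᶠ[𝓝 a] g' := hg.mono fun t ht => ht.deriv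
  have hsecond : deriv (deriv g) a = c := hderiv.deriv_eq.trans hg'.deriv
  have hmin : IsLocalMin g a := isLocalMin_of_deriv_deriv_pos (hsecond ▸ hc) hmax.deriv_eq_zero
    hg.self_of_nhds.continuousAt
  have hconst : g =ᶠ[𝓝 a] fun _ => g a := by
    filter_upwards [hmax, hmin] with t h₁ h₂ using le_antisymm h₁ h₂
  have hzero : deriv (deriv g) a = 0 := by
    rw [hconst.deriv.deriv_eq]
    simp
  exact hc.ne' (hsecond.symm.trans hzero)

/-- A function vanishing at `0` and nonpositive to the right of `0` has nonpositive derivative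
at `0`. -/
theorem HasDerivAt.nonpos_of_eventually_nonpos {f : ℝ → ℝ} {c : ℝ} (hf : HasDerivAt f c 0)
    (h₀ : f 0 = 0) (h : ∀ᶠ t in 𝓝[>] 0, f t ≤ 0) : c ≤ 0 := by
  have hslope := (hasDerivWithinAt_iff_tendsto_slope' self_notMem_Ioi).mp
    (hf.hasDerivWithinAt (s := Ioi 0))
  refine le_of_tendsto hslope ?_
  filter_upwards [h, self_mem_nhdsWithin] with t ht ht₀
  have ht₀ : 0 < t := ht₀
  rw [slope_def_field, h₀, sub_zero, sub_zero]
  exact div_nonpos_of_nonpos_of_nonneg ht ht₀.le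

section Lines

variable {E : Type*} [NormedAddCommGroup E] [NormedSpace ℝ E] {u : E → ℝ}

theorem HasDerivAt.comp_line {p v : E} {t : ℝ} (hu : DifferentiableAt ℝ u (p + t • v)) :
    HasDerivAt (fun s : ℝ => u (p + s • v)) (fderiv ℝ u (p + t • v) v) t := by
  have hline : HasDerivAt (fun s : ℝ => p + s • v) v t := by
    simpa using ((hasDerivAt_id t).smul_const v).const_add p
  exact hu.hasFDerivAt.comp_hasDerivAt t hline

theorem ContDiffAt.eventually_hasDerivAt_comp_line {p : E} (hu : ContDiffAt ℝ 2 u p) (v : E) :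
    ∀ᶠ t : ℝ in 𝓝 0, HasDerivAt (fun s : ℝ => u (p + s • v)) (fderiv ℝ u (p + t • v) v) t := by
  have hcont : Filter.Tendsto (fun t : ℝ => p + t • v) (𝓝 0) (𝓝 p) := by
    have : Continuous fun t : ℝ => p + t • v := by fun_prop
    simpa using this.tendsto 0
  filter_upwards [hcont.eventually (hu.eventually (by simp))] with t ht
  exact HasDerivAt.comp_line (ht.differentiableAt (by simp))

theorem ContDiffAt.hasDerivAt_fderiv_comp_line {p : E} (hu : ContDiffAt ℝ 2 u p) (v : E) :
    HasDerivAt (fun s : ℝ => fderiv ℝ u (p + s • v) v)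
      (fderiv ℝ (fun y => fderiv ℝ u y v) p v) 0 := by
  have hdiff : DifferentiableAt ℝ (fun y => fderiv ℝ u y v) p :=
    ((hu.fderiv_right (m := 1) (by norm_num)).differentiableAt (by simp)).clm_apply
      (differentiableAt_const v)
  simpa using HasDerivAt.comp_line (u := fun y => fderiv ℝ u y v) (p := p) (v := v) (t := 0)
    (by simpa using hdiff)

/-- The second derivative in a direction is even in that direction. -/
theorem fderiv_fderiv_smul_of_sq_eq_one (p v : E) {σ : ℝ} (hσ : σ ^ 2 = 1) :
    fderiv ℝ (fun y => fderiv ℝ u y (σ • v)) p (σ • v) =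
      fderiv ℝ (fun y => fderiv ℝ u y v) p v := by
  rcases sq_eq_one_iff.mp hσ with rfl | rfl <;> simp

end Lines

section Reflection

variable {n : ℕ}

/-- Reflection of `ℝⁿ` in the hyperplane where the `i`-th coordinate vanishes. -/
def coordReflect (i : Fin n) (y : En n) : En n := y - (2 * y i) • EuclideanSpace.single i (1 : ℝ)

theorem continuous_coordReflect (i : Fin n) : Continuous (coordReflect i) := by
  unfold coordReflect
  fun_prop

theorem norm_add_smul_single_sq (y : En n) (j : Fin n) (t : ℝ) :
    ‖y + t • EuclideanSpace.single j (1 : ℝ)‖ ^ 2 = ‖y‖ ^ 2 + 2 * t * y j + t ^ 2 := by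
  rw [norm_add_sq_real, inner_smul_right, norm_smul]
  simp [EuclideanSpace.inner_single_right]
  ring

theorem norm_coordReflect (i : Fin n) (y : En n) : ‖coordReflect i y‖ = ‖y‖ := by
  have h := norm_add_smul_single_sq y i (-(2 * y i))
  rw [neg_smul, ← sub_eq_add_neg] at h
  refine (sq_eq_sq₀ (norm_nonneg _) (norm_nonneg _)).mp (h.trans ?_)
  ring

theorem coordReflect_add_smul_single (i j : Fin n) (y : En n) (t : ℝ) :
    coordReflect i (y + t • EuclideanSpace.single j (1 : ℝ)) =
      coordReflect i y + t • ((if i = j then -1 else 1 : ℝ) • EuclideanSpace.single j (1 : ℝ)) := by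
  unfold coordReflect
  split_ifs with h
  · subst h
    simp only [PiLp.add_apply, PiLp.smul_apply, PiLp.single_apply, smul_eq_mul, if_true]
    module
  · simp only [PiLp.add_apply, PiLp.smul_apply, PiLp.single_apply, smul_eq_mul, if_neg h]
    module

/-- Comparison of the odd part of a harmonic function on a half ball with a quadratic barrier. -/
theorem IsHarmonicOn.sub_reflect_le {u : En n → ℝ} {Ω : Set (En n)} (hu : IsHarmonicOn u Ω)
    (hΩ : IsOpen Ω) {x : En n} {ρ M : ℝ} (hρ : 0 < ρ) (hM : 0 < M)
    (hsub : closedBall x ρ ⊆ Ω)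
    (hosc : ∀ a ∈ closedBall x ρ, ∀ b ∈ closedBall x ρ, u a - u b ≤ M)
    (i : Fin n) {y : En n} (hy : ‖y‖ ≤ ρ) (hyi : 0 ≤ y i) :
    u (x + y) - u (x + coordReflect i y) ≤
      M / ρ ^ 2 * (‖y‖ ^ 2 + (n + 1) * (ρ * y i - y i ^ 2)) := by
  set k := M / ρ ^ 2 with hk
  have hk₀ : 0 < k := by positivity
  have hkρ : k * ρ ^ 2 = M := div_mul_cancel₀ M (by positivity)
  set w : En n → ℝ := fun z => u (x + z) - u (x + coordReflect i z) -
    k * (‖z‖ ^ 2 + (n + 1) * (ρ * z i - z i ^ 2)) with hw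
  set K : Set (En n) := closedBall 0 ρ ∩ {z | 0 ≤ z i} with hK
  have hball : ∀ z : En n, ‖z‖ ≤ ρ → x + z ∈ closedBall x ρ := fun z hz => by
    simpa [mem_closedBall, dist_eq_norm] using hz
  have hballR : ∀ z : En n, ‖z‖ ≤ ρ → x + coordReflect i z ∈ closedBall x ρ := fun z hz =>
    hball _ ((norm_coordReflect i z).trans_le hz)
  have hKcompact : IsCompact K := (isCompact_closedBall 0 ρ).inter_right
    (isClosed_le continuous_const (by fun_prop))
  have hyK : y ∈ K := ⟨by simpa using hy, hyi⟩
  have hwcont : ContinuousOn w K := by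
    have hR := continuous_coordReflect i
    refine ContinuousOn.sub (ContinuousOn.sub ?_ ?_) (by fun_prop)
    · exact hu.1.continuousOn.comp (by fun_prop) fun z hz => hsub (hball z (by simpa using hz.1))
    · exact hu.1.continuousOn.comp (by fun_prop) fun z hz => hsub (hballR z (by simpa using hz.1))
  obtain ⟨z, hzK, hzmax⟩ := hKcompact.exists_isMaxOn ⟨y, hyK⟩ hwcont
  suffices hwz : w z ≤ 0 by
    have := (hzmax hyK).trans hwz
    simp only [hw] at this
    linarith
  have hzρ : ‖z‖ ≤ ρ := by simpa using hzK.1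
  have hzi : 0 ≤ z i := hzK.2
  have hziρ : z i ≤ ρ := (le_abs_self _).trans ((PiLp.norm_apply_le z i).trans hzρ)
  have hlin : 0 ≤ ((n : ℝ) + 1) * (ρ * z i - z i ^ 2) :=
    mul_nonneg (by positivity) (by nlinarith)
  rcases hzi.eq_or_lt with hzi₀ | hzi₀
  · have hfix : coordReflect i z = z := by simp [coordReflect, ← hzi₀]
    have : 0 ≤ k * (‖z‖ ^ 2 + (n + 1) * (ρ * z i - z i ^ 2)) := by positivity
    simp only [hw, hfix]
    linarith
  rcases hzρ.eq_or_lt with hzρ₀ | hzρ₀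
  · have h₁ := hosc _ (hball z hzρ) _ (hballR z hzρ)
    have h₂ := mul_nonneg hk₀.le hlin
    simp only [hw, hzρ₀, mul_add, hkρ] at h₂ ⊢
    linarith
  exfalso
  have hKnhds : K ∈ 𝓝 z := by
    refine Filter.inter_mem (closedBall_mem_nhds_of_mem (by simpa using hzρ₀)) ?_
    have : IsOpen {z : En n | 0 < z i} := isOpen_lt continuous_const (by fun_prop)
    exact Filter.mem_of_superset (this.mem_nhds hzi₀) fun a (ha : 0 < a i) => ha.le
  have hlocmax : IsLocalMax w z := hzmax.isLocalMax hKnhds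
  have hp : x + z ∈ Ω := hsub (hball z hzρ)
  have hq : x + coordReflect i z ∈ Ω := hsub (hballR z hzρ)
  have hcp := hu.1.contDiffAt (hΩ.mem_nhds hp)
  have hcq := hu.1.contDiffAt (hΩ.mem_nhds hq)
  set e : Fin n → En n := fun j => EuclideanSpace.single j (1 : ℝ) with he
  set D : En n → Fin n → ℝ := fun a j => fderiv ℝ (fun b => fderiv ℝ u b (e j)) a (e j) with hD
  have hsecond : ∀ j, D (x + z) j - D (x + coordReflect i z) j -
      k * (2 - (n + 1) * (if i = j then 2 else 0)) ≤ 0 := by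
    intro j
    set σ : ℝ := if i = j then -1 else 1 with hσ
    set d : ℝ := if i = j then 1 else 0 with hd
    have hσ₂ : σ ^ 2 = 1 := by rw [hσ]; split_ifs <;> norm_num
    have hd₂ : (if i = j then 2 else 0 : ℝ) = 2 * d ^ 2 := by rw [hd]; split_ifs <;> norm_num
    have hwline : ∀ t : ℝ, w (z + t • e j) = u (x + z + t • e j) -
        u (x + coordReflect i z + t • (σ • e j)) -
        k * (‖z‖ ^ 2 + 2 * t * z j + t ^ 2 +
          (n + 1) * (ρ * (z i + t * d) - (z i + t * d) ^ 2)) := by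
      intro t
      have hcoord : (z + t • e j) i = z i + t * d := by
        simp [he, hd, PiLp.single_apply]
      simp only [hw, hcoord]
      simp only [he, coordReflect_add_smul_single, norm_add_smul_single_sq, add_assoc, hσ]
    have hmax : IsLocalMax (fun t : ℝ => w (z + t • e j)) 0 := by
      have hcont : ContinuousAt (fun t : ℝ => z + t • e j) 0 := by fun_prop
      have : IsLocalMax w (z + (0 : ℝ) • e j) := by simpa using hlocmax
      exact IsMaxFilter.comp_tendsto (g := fun t : ℝ => z + t • e j) this hcont
    rw [show (fun t : ℝ => w (z + t • e j)) = _ from funext hwline] at hmax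
    have hquad : ∀ t : ℝ, HasDerivAt (fun t : ℝ => k * (‖z‖ ^ 2 + 2 * t * z j + t ^ 2 +
        (n + 1) * (ρ * (z i + t * d) - (z i + t * d) ^ 2)))
        (k * (2 * z j + 2 * t + (n + 1) * (ρ * d - 2 * (z i + t * d) * d))) t := by
      intro t
      have hid := hasDerivAt_id' t
      have hl := (hid.mul_const d).const_add (z i)
      exact ((((((hid.const_mul 2).mul_const (z j)).const_add (‖z‖ ^ 2)).add (hid.pow 2)).add
        (((hl.const_mul ρ).sub (hl.pow 2)).const_mul ((n : ℝ) + 1))).const_mul k).congr_deriv (by simp)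
    have hquad' : HasDerivAt (fun t : ℝ =>
        k * (2 * z j + 2 * t + (n + 1) * (ρ * d - 2 * (z i + t * d) * d)))
        (k * (2 - (n + 1) * (2 * d ^ 2))) 0 := by
      have hid := hasDerivAt_id' (0 : ℝ)
      have hl := (hid.mul_const d).const_add (z i)
      exact ((((hid.const_mul 2).const_add (2 * z j)).add
        ((((hl.const_mul 2).mul_const d).const_sub (ρ * d)).const_mul
          ((n : ℝ) + 1))).const_mul k).congr_deriv (by ring)
    rw [hd₂]
    refine hmax.second_deriv_nonpos (g' := fun t => fderiv ℝ u (x + z + t • e j) (e j) -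
      fderiv ℝ u (x + coordReflect i z + t • (σ • e j)) (σ • e j) -
      k * (2 * z j + 2 * t + (n + 1) * (ρ * d - 2 * (z i + t * d) * d))) ?_ ?_
    · filter_upwards [hcp.eventually_hasDerivAt_comp_line (e j),
        hcq.eventually_hasDerivAt_comp_line (σ • e j)] with t h₁ h₂
      exact (h₁.sub h₂).sub (hquad t)
    · have h₂ := hcq.hasDerivAt_fderiv_comp_line (σ • e j)
      rw [fderiv_fderiv_smul_of_sq_eq_one _ _ hσ₂] at h₂
      exact ((hcp.hasDerivAt_fderiv_comp_line (e j)).sub h₂).sub hquad'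
  have hsum := Finset.sum_nonpos fun j (_ : j ∈ Finset.univ) => hsecond j
  have hsp : ∑ j, D (x + z) j = 0 := hu.2 _ hp
  have hsq : ∑ j, D (x + coordReflect i z) j = 0 := hu.2 _ hq
  rw [Finset.sum_sub_distrib, Finset.sum_sub_distrib, hsp, hsq, ← Finset.mul_sum,
    Finset.sum_sub_distrib, ← Finset.mul_sum, Finset.sum_ite_eq] at hsum
  simp only [Finset.mem_univ, if_true, Finset.sum_const, Finset.card_univ, Fintype.card_fin,
    nsmul_eq_mul] at hsum
  nlinarith

theorem IsHarmonicOn.neg {u : En n → ℝ} {Ω : Set (En n)} (hu : IsHarmonicOn u Ω) :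
    IsHarmonicOn (-u) Ω := by
  refine ⟨hu.1.neg, fun x hx => ?_⟩
  simpa [fderiv_neg, fderiv_fun_neg, Finset.sum_neg_distrib] using hu.2 x hx

theorem IsHarmonicOn.fderiv_single_le {u : En n → ℝ} {Ω : Set (En n)} (hu : IsHarmonicOn u Ω)
    (hΩ : IsOpen Ω) {x : En n} {ρ M : ℝ} (hρ : 0 < ρ) (hM : 0 < M)
    (hsub : closedBall x ρ ⊆ Ω)
    (hosc : ∀ a ∈ closedBall x ρ, ∀ b ∈ closedBall x ρ, u a - u b ≤ M) (i : Fin n) :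
    fderiv ℝ u x (EuclideanSpace.single i 1) ≤ (n + 1) * M / (2 * ρ) := by
  set e : En n := EuclideanSpace.single i (1 : ℝ) with he
  have hx : x ∈ Ω := hsub (mem_closedBall_self hρ.le)
  have hdiff : DifferentiableAt ℝ u x :=
    (hu.1.contDiffAt (hΩ.mem_nhds hx)).differentiableAt (by simp)
  have hd : ∀ v : En n, HasDerivAt (fun t : ℝ => u (x + t • v)) (fderiv ℝ u x v) 0 := fun v => by
    simpa using HasDerivAt.comp_line (p := x) (v := v) (t := 0) (by simpa using hdiff)
  have hline : HasDerivAt (fun t : ℝ => u (x + t • e) - u (x + t • -e) - (n + 1) * M / ρ * t)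
      (fderiv ℝ u x e - fderiv ℝ u x (-e) - (n + 1) * M / ρ) 0 := by
    exact (((hd e).sub (hd (-e))).sub
      ((hasDerivAt_id' (0 : ℝ)).const_mul ((n + 1) * M / ρ))).congr_deriv (by simp)
  have hle := hline.nonpos_of_eventually_nonpos (by simp) ?_
  · rw [map_neg] at hle
    have : (n + 1) * M / (2 * ρ) = (n + 1) * M / ρ / 2 := by ring
    linarith
  · filter_upwards [Ioo_mem_nhdsGT hρ] with t ht
    have hnorm : ‖t • e‖ = t := by simp [he, norm_smul, abs_of_pos ht.1]
    have hcoord : (t • e) i = t := by simp [he]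
    have hrefl : coordReflect i (t • e) = t • -e := by
      rw [coordReflect, hcoord]
      module
    have hcmp := hu.sub_reflect_le hΩ hρ hM hsub hosc i (y := t • e) (hnorm.trans_le ht.2.le)
      (hcoord.symm ▸ ht.1.le)
    rw [hrefl, hnorm, hcoord] at hcmp
    have hquad : M / ρ ^ 2 * (t ^ 2 + (n + 1) * (ρ * t - t ^ 2)) ≤ (n + 1) * M / ρ * t := by
      have h₁ : (n + 1) * M / ρ * t = M / ρ ^ 2 * ((n + 1) * (ρ * t)) := by
        field_simp
      rw [h₁]
      have : 0 ≤ (n : ℝ) * t ^ 2 := by positivity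
      gcongr
      nlinarith
    linarith

/-- Interior gradient estimate for harmonic functions in terms of the oscillation. -/
theorem IsHarmonicOn.norm_gradient_le {u : En n → ℝ} {Ω : Set (En n)} (hu : IsHarmonicOn u Ω)
    (hΩ : IsOpen Ω) {x : En n} {ρ M : ℝ} (hρ : 0 < ρ)
    (hsub : closedBall x ρ ⊆ Ω)
    (hosc : ∀ a ∈ closedBall x ρ, ∀ b ∈ closedBall x ρ, |u a - u b| ≤ M) :
    ‖gradient u x‖ ≤ n * ((n + 1) * M / (2 * ρ)) := by
  have hM : 0 ≤ M := (abs_nonneg _).trans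
    (hosc x (mem_closedBall_self hρ.le) x (mem_closedBall_self hρ.le))
  have hcoord : ∀ i : Fin n, |fderiv ℝ u x (EuclideanSpace.single i 1)| ≤
      (n + 1) * M / (2 * ρ) := by
    intro i
    have hpos : ∀ M' > M, |fderiv ℝ u x (EuclideanSpace.single i 1)| ≤
        (n + 1) * M' / (2 * ρ) := by
      intro M' hM'
      have h₁ := hu.fderiv_single_le hΩ hρ (hM.trans_lt hM') hsub
        (fun a ha b hb => (le_abs_self _).trans ((hosc a ha b hb).trans hM'.le)) i
      have h₂ := hu.neg.fderiv_single_le hΩ hρ (hM.trans_lt hM') hsub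
        (fun a ha b hb => by
          have := (neg_le_abs _).trans ((hosc a ha b hb).trans hM'.le)
          simp only [Pi.neg_apply]
          linarith) i
      rw [fderiv_neg, neg_apply] at h₂
      exact abs_le'.mpr ⟨h₁, h₂⟩
    have hcont : Filter.Tendsto (fun M' : ℝ => (n + 1) * M' / (2 * ρ)) (𝓝[>] M)
        (𝓝 ((n + 1) * M / (2 * ρ))) :=
      (Continuous.tendsto (by fun_prop) M).mono_left nhdsWithin_le_nhds
    exact ge_of_tendsto hcont (by filter_upwards [self_mem_nhdsWithin] with M' h using hpos M' h)
  have hsum := (EuclideanSpace.basisFun (Fin n) ℝ).sum_repr' (gradient u x)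
  rw [← hsum]
  refine (norm_sum_le _ _).trans ?_
  have : ∀ i ∈ Finset.univ, ‖inner ℝ (EuclideanSpace.basisFun (Fin n) ℝ i) (gradient u x) •
      EuclideanSpace.basisFun (Fin n) ℝ i‖ ≤ (n + 1) * M / (2 * ρ) := by
    intro i _
    have hin : inner ℝ (EuclideanSpace.basisFun (Fin n) ℝ i) (gradient u x) =
        fderiv ℝ u x (EuclideanSpace.single i 1) := by
      rw [real_inner_comm, gradient, InnerProductSpace.toDual_symm_apply,
        EuclideanSpace.basisFun_apply]
    rw [hin, norm_smul, OrthonormalBasis.norm_eq_one, mul_one, Real.norm_eq_abs]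
    exact hcoord i
  simpa using Finset.sum_le_sum this

end Reflection

/-- A ball centred in an open set which does not meet the frontier lies in the set. -/
theorem IsOpen.ball_infDist_frontier_subset {E : Type*} [NormedAddCommGroup E] [NormedSpace ℝ E]
    {s : Set E} (hs : IsOpen s) {x : E} (hx : x ∈ s) : ball x (infDist x (frontier s)) ⊆ s := by
  intro y hy
  have hr : 0 < infDist x (frontier s) := pos_of_mem_ball hy
  have hdisj : Disjoint (ball x (infDist x (frontier s))) (frontier s) := disjoint_ball_infDist
  refine (convex_ball x _).isPreconnected.subset_left_of_subset_union hs
    isClosed_closure.isOpen_compl (disjoint_compl_right.mono_left subset_closure) ?_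
    ⟨x, mem_ball_self hr, hx⟩ hy
  intro z hz
  by_cases hzs : z ∈ s
  · exact Or.inl hzs
  · refine Or.inr fun hzc => hdisj.le_bot ⟨hz, hzc, ?_⟩
    rwa [hs.interior_eq]

/-- A harmonic function which is Lipschitz-`B` for a majorant `B` has its
gradient bounded by a constant times `B (δ x) / δ x`. -/
theorem lipschitzB_harmonic_gradient_bound
    {n : ℕ} (Ω : Set (En n)) (hΩ_open : IsOpen Ω) (hΩ_conn : IsConnected Ω)
    (hΩ_bdd : Bornology.IsBounded Ω) (hΩ_smooth : HasSmoothBoundary Ω)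
    (B : ℝ → ℝ) (hB : Majorant B)
    (u : En n → ℝ) (hu : IsHarmonicOn u Ω)
    (Cu : ℝ) (hCu : 0 < Cu)
    (hLip : ∀ x ∈ Ω, ∀ y ∈ Ω, |u x - u y| ≤ Cu * B ‖x - y‖) :
    ∃ C > (0:ℝ), ∀ x ∈ Ω,
      ‖gradient u x‖ ≤ C * B (infDist x (frontier Ω)) / infDist x (frontier Ω) := by
  obtain ⟨-, hB₀, -, hBmono, -⟩ := hB
  refine ⟨(n + 1) * (n + 1) * Cu, by positivity, fun x hx => ?_⟩
  rcases Nat.eq_zero_or_pos n with rfl | hn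
  · rw [Subsingleton.elim (gradient u x) 0, norm_zero]
    have := hB₀ _ (infDist_nonneg (x := x) (s := frontier Ω))
    have := infDist_nonneg (x := x) (s := frontier Ω)
    positivity
  have : NeZero n := ⟨hn.ne'⟩
  have hfr : (frontier Ω).Nonempty := by
    refine nonempty_frontier_iff.mpr ⟨⟨x, hx⟩, ?_⟩
    rintro rfl
    exact NormedSpace.unbounded_univ ℝ (En n) hΩ_bdd
  set δ := infDist x (frontier Ω) with hδ
  have hδ₀ : 0 < δ := (isClosed_frontier.notMem_iff_infDist_pos hfr).mp fun h =>
    h.2 (by rwa [hΩ_open.interior_eq])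
  have hsub : closedBall x (δ / 2) ⊆ Ω := (closedBall_subset_ball (by linarith)).trans
    (hΩ_open.ball_infDist_frontier_subset hx)
  have hgrad := hu.norm_gradient_le hΩ_open (half_pos hδ₀) hsub (M := Cu * B δ)
    fun a ha b hb => (hLip a (hsub ha) b (hsub hb)).trans <| by
      refine mul_le_mul_of_nonneg_left (hBmono _ _ (norm_nonneg _) ?_) hCu.le
      rw [← dist_eq_norm]
      exact (dist_triangle_right a b x).trans
        ((add_le_add ha hb).trans (add_halves δ).le)
  refine hgrad.trans ?_
  have hBδ := hB₀ δ hδ₀.le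
  have hrw : (n : ℝ) * ((n + 1) * (Cu * B δ) / (2 * (δ / 2))) =
      n * (n + 1) * Cu * B δ / δ := by
    field_simp
  rw [hrw]
  gcongr
  linarith
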